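/- With the notation and hypotheses of the context, for all λ₁, λ₂ ∈ ℂ one has det[(λ₁I − Z)·X·(λ₂I − Z) + (λ₂ − λ₁)I] = (λ₂ − λ₁)·p(λ₁)·q(λ₂), where p(λ) = fᵀ·adjugate(λI − Z)·v and q(λ) = wᵀ·adjugate(λI − Z)·e. -/

import Mathlib

open Matrix

/-- The matrix determinant lemma, with no invertibility hypothesis. -/
lemma det_add_vecMulVec_adj {n : ℕ} (A : Matrix (Fin n) (Fin n) ℂ) (u v : Fin n → ℂ) :
    (A + vecMulVec u v).det = A.det + v ⬝ᵥ (A.adjugate *ᵥ u) := by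
  have key : ∀ B : Matrix (Fin n) (Fin n) ℂ, B.det ≠ 0 →
      (B + vecMulVec u v).det = B.det + v ⬝ᵥ (B.adjugate *ᵥ u) := by
    intro B hB
    have h1 : B + vecMulVec u v = B * (1 + vecMulVec (B⁻¹ *ᵥ u) v) := by
      rw [Matrix.mul_add, Matrix.mul_one, mul_vecMulVec, mulVec_mulVec,
        Matrix.mul_nonsing_inv _ (isUnit_iff_ne_zero.2 hB), one_mulVec]
    have h2 : (1 + vecMulVec (B⁻¹ *ᵥ u) v).det = 1 + v ⬝ᵥ (B⁻¹ *ᵥ u) := by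
      rw [vecMulVec_eq Unit, det_one_add_replicateCol_mul_replicateRow]
    rw [h1, det_mul, h2, Matrix.inv_def, Ring.inverse_eq_inv', smul_mulVec, dotProduct_smul,
      smul_eq_mul]
    field_simp
  have hfin : {t : ℂ | (t • (1 : Matrix (Fin n) (Fin n) ℂ) + A).det = 0}.Finite := by
    refine ((-A).charpoly.roots.toFinset.finite_toSet).subset ?_
    intro t ht
    have hne : (-A).charpoly ≠ 0 := (Matrix.charpoly_monic _).ne_zero
    simp only [Finset.mem_coe, Multiset.mem_toFinset, Polynomial.mem_roots hne,
      Polynomial.IsRoot.def, Matrix.eval_charpoly]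
    have ht' : (t • (1 : Matrix (Fin n) (Fin n) ℂ) + A).det = 0 := ht
    rw [← ht', sub_neg_eq_add, Matrix.smul_one_eq_diagonal]
    rfl
  have hdense : Dense {t : ℂ | (t • (1 : Matrix (Fin n) (Fin n) ℂ) + A).det = 0}ᶜ :=
    hfin.countable.dense_compl ℂ
  have := Continuous.ext_on hdense
    (f := fun t : ℂ => ((t • (1 : Matrix (Fin n) (Fin n) ℂ) + A) + vecMulVec u v).det)
    (g := fun t : ℂ => (t • (1 : Matrix (Fin n) (Fin n) ℂ) + A).det +
      v ⬝ᵥ ((t • (1 : Matrix (Fin n) (Fin n) ℂ) + A).adjugate *ᵥ u))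
    (by fun_prop) (by
      have h : Continuous fun t : ℂ => t • (1 : Matrix (Fin n) (Fin n) ℂ) + A := by fun_prop
      exact h.matrix_det.add
        (continuous_const.dotProduct (h.matrix_adjugate.matrix_mulVec continuous_const)))
    (fun t ht => key _ ht)
  simpa using congrFun this 0


/-- `det[(λ₁I − Z)·X·(λ₂I − Z) + (λ₂ − λ₁)I] = (λ₂ − λ₁)·p(λ₁)·q(λ₂)`. -/
theorem det_two_sided_factor (n : ℕ) (hn : 1 ≤ n)
    (X Z : Matrix (Fin n) (Fin n) ℂ)
    (hrank : (X * Z - Z * X + 1).rank = 1)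
    (hdet : X.det = 0)
    (e f v w : Fin n → ℂ)
    (hef : X * Z - Z * X + 1 = vecMulVec e f)
    (hvw : X.adjugate = vecMulVec v w)
    (lam₁ lam₂ : ℂ) :
    ((lam₁ • (1 : Matrix (Fin n) (Fin n) ℂ) - Z) * X *
        (lam₂ • (1 : Matrix (Fin n) (Fin n) ℂ) - Z) +
        (lam₂ - lam₁) • (1 : Matrix (Fin n) (Fin n) ℂ)).det =
      (lam₂ - lam₁) *
        (f ⬝ᵥ ((lam₁ • (1 : Matrix (Fin n) (Fin n) ℂ) - Z).adjugate *ᵥ v)) *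
        (w ⬝ᵥ ((lam₂ • (1 : Matrix (Fin n) (Fin n) ℂ) - Z).adjugate *ᵥ e)) := by
  set A := lam₁ • (1 : Matrix (Fin n) (Fin n) ℂ) - Z with hA
  set B := lam₂ • (1 : Matrix (Fin n) (Fin n) ℂ) - Z with hB
  have hM : A * X * B + (lam₂ - lam₁) • (1 : Matrix (Fin n) (Fin n) ℂ) =
      B * X * A + vecMulVec ((lam₂ - lam₁) • e) f := by
    rw [smul_vecMulVec, ← hef, hA, hB]
    simp only [sub_mul, mul_sub, smul_mul_assoc, mul_smul_comm, one_mul, mul_one, smul_sub,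
      smul_add, sub_smul, smul_smul]
    rw [mul_comm lam₁ lam₂]
    abel
  rw [hM, det_add_vecMulVec_adj, det_mul, det_mul, hdet, adjugate_mul_distrib,
    adjugate_mul_distrib, hvw, mulVec_smul, dotProduct_smul, ← mulVec_mulVec, ← mulVec_mulVec,
    vecMulVec_mulVec]
  simp [mulVec_smul, dotProduct_smul]
  ring
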